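/- Let R be a commutative ring, A and B R-modules, and ψ : A → B an injective R-linear map admitting an R-linear retraction ρ : B → A with ρ ∘ ψ = id_A. Let ι : A → B be an R-linear map such that ι ∘ ρ : B → B is locally nilpotent, and set f = ψ + ι. Then the automorphism id_B + ι∘ρ of B maps the submodule ψ(A) onto the submodule f(A), and consequently it induces an isomorphism of quotient modules B / ψ(A) ≅ B / f(A). -/

import Mathlib

/-- With `ψ : A → B` injective `R`-linear, `ρ : B → A` a retraction
(`ρ ∘ ψ = id`), `ι : A → B` `R`-linear with `ι ∘ ρ` locally nilpotent, and `f = ψ + ι`: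
the automorphism `id + ι∘ρ` of `B` maps the submodule `ψ(A)` onto the submodule `f(A)`,
and consequently it induces an isomorphism of quotient modules `B / ψ(A) ≅ B / f(A)`. -/
theorem quotient_iso_of_locally_nilpotent_perturbation
    {R : Type*} [CommRing R] {A B : Type*} [AddCommGroup A] [Module R A]
    [AddCommGroup B] [Module R B]
    (ψ : A →ₗ[R] B) (hψ : Function.Injective ψ)
    (ρ : B →ₗ[R] A) (hρψ : ρ.comp ψ = LinearMap.id)
    (ι : A →ₗ[R] B) (hln : ∀ b : B, ∃ k : ℕ, ((ι.comp ρ) ^ k) b = 0) :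
    Submodule.map ((LinearMap.id : B →ₗ[R] B) + ι.comp ρ) (LinearMap.range ψ) =
        LinearMap.range (ψ + ι) ∧
      Nonempty ((B ⧸ LinearMap.range ψ) ≃ₗ[R] (B ⧸ LinearMap.range (ψ + ι))) := by
  have hmap : Submodule.map ((LinearMap.id : B →ₗ[R] B) + ι.comp ρ) (LinearMap.range ψ) =
      LinearMap.range (ψ + ι) := by
    rw [← LinearMap.range_comp]
    congr 1
    rw [LinearMap.add_comp, LinearMap.comp_assoc, hρψ, LinearMap.id_comp, LinearMap.comp_id]
  refine ⟨hmap, ?_⟩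
  generalize ι.comp ρ = n at hln hmap
  have hinj : ∀ (k : ℕ) (b : B), (n ^ k) b = 0 → b + n b = 0 → b = 0 := by
    intro k
    induction k with
    | zero => intro b hb _; simpa using hb
    | succ k ih =>
      intro b hb h
      rw [pow_succ, Module.End.mul_apply] at hb
      have h2 : n b = 0 := ih (n b) hb (by rw [← map_add, h, map_zero])
      simpa [h2] using h
  have hsurj : ∀ (k : ℕ) (b : B), (n ^ k) b = 0 → ∃ c, c + n c = b := by
    intro k
    induction k with
    | zero => intro b hb; exact ⟨0, by simpa using hb.symm⟩
    | succ k ih =>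
      intro b hb
      rw [pow_succ, Module.End.mul_apply] at hb
      obtain ⟨c, hc⟩ := ih (n b) hb
      refine ⟨b - c, ?_⟩
      rw [map_sub, ← hc]
      abel
  have hbij : Function.Bijective ((LinearMap.id : B →ₗ[R] B) + n) := by
    constructor
    · rw [injective_iff_map_eq_zero]
      intro b hb
      obtain ⟨k, hk⟩ := hln b
      exact hinj k b hk hb
    · intro b
      obtain ⟨k, hk⟩ := hln b
      exact hsurj k b hk
  exact ⟨Submodule.Quotient.equiv _ _ (LinearEquiv.ofBijective _ hbij) hmap⟩
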